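/- arXiv:2009.14564 — 3 statements merged into one kernel-verified Lean document; each statement's English description precedes it below -/
import Mathlib

section
/- For all real numbers A, B with A ≠ 0 there exists a C^∞ function f̃ : ℝ² → ℝ such that: (i) f̃(x,y) = A·x + B for every point (x,y) outside the open square (−1,1)×(−1,1); (ii) there exist two distinct points p₁, p₂ ∈ (−1,1)×(−1,1) such that the set of critical points of f̃ (the points where the total derivative of f̃ vanishes) is exactly {p₁, p₂}; (iii) the Hessian quadratic form of f̃ at p₁ is negative definite, i.e. p₁ is a non-degenerate local maximum; (iv) the Hessian of f̃ at p₂ is non-degenerate and indefinite, i.e. (∂²f̃/∂x²)(p₂)·(∂²f̃/∂y²)(p₂) − ((∂²f̃/∂x∂y)(p₂))² < 0, so p₂ is a non-degenerate saddle. -/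
/-- The second directional derivative (Hessian bilinear form) of `f : ℝ² → ℝ`
at the point `p`, evaluated on the directions `v`, `w`. -/
noncomputable def hessianForm (f : ℝ × ℝ → ℝ) (p v w : ℝ × ℝ) : ℝ :=
  fderiv ℝ (fun q => fderiv ℝ f q v) p w

/-- The open square `(−1,1) × (−1,1)` in `ℝ²`. -/
def openSquare : Set (ℝ × ℝ) := Set.Ioo (-1 : ℝ) 1 ×ˢ Set.Ioo (-1 : ℝ) 1

/-- The smooth bump `exp (-1 / (1 - x²))` on `(-1, 1)`, extended by zero. -/
noncomputable def squareBump (x : ℝ) : ℝ := expNegInvGlue (1 - x ^ 2)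

/-- The derivative of `squareBump`. -/
noncomputable def squareBumpDeriv (x : ℝ) : ℝ :=
  -2 * x * ((1 - x ^ 2)⁻¹ ^ 2 * squareBump x)

/-- The second derivative of `squareBump`. -/
noncomputable def squareBumpDeriv₂ (x : ℝ) : ℝ :=
  (6 * x ^ 4 - 2) * ((1 - x ^ 2)⁻¹ ^ 4 * squareBump x)

theorem contDiff_squareBump : ContDiff ℝ (⊤ : ℕ∞) squareBump :=
  expNegInvGlue.contDiff.comp (by fun_prop : ContDiff ℝ (⊤ : ℕ∞) fun x : ℝ => 1 - x ^ 2)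

theorem squareBump_pos {x : ℝ} (hx : x ^ 2 < 1) : 0 < squareBump x :=
  expNegInvGlue.pos_of_pos (by linarith)

theorem squareBump_eq_zero {x : ℝ} (hx : 1 ≤ x ^ 2) : squareBump x = 0 :=
  expNegInvGlue.zero_of_nonpos (by linarith)

theorem squareBumpDeriv_eq_zero {x : ℝ} (hx : 1 ≤ x ^ 2) : squareBumpDeriv x = 0 := by
  simp [squareBumpDeriv, squareBump_eq_zero hx]

theorem hasDerivAt_one_sub_sq (x : ℝ) : HasDerivAt (fun x : ℝ => 1 - x ^ 2) (-(2 * x)) x := by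
  simpa using (hasDerivAt_pow 2 x).const_sub 1

theorem hasDerivAt_squareBump (x : ℝ) : HasDerivAt squareBump (squareBumpDeriv x) x := by
  have h := (expNegInvGlue.hasDerivAt_polynomial_eval_inv_mul 1 (1 - x ^ 2)).comp x
    (hasDerivAt_one_sub_sq x)
  refine (h.congr_deriv ?_).congr_of_eventuallyEq (.of_forall fun y => ?_)
  · simp [squareBumpDeriv, squareBump]; ring
  · simp [squareBump]

theorem hasDerivAt_squareBumpDeriv (x : ℝ) :
    HasDerivAt squareBumpDeriv (squareBumpDeriv₂ x) x := by
  have h := ((hasDerivAt_id x).const_mul (-2)).mul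
    ((expNegInvGlue.hasDerivAt_polynomial_eval_inv_mul (Polynomial.X ^ 2) (1 - x ^ 2)).comp x
      (hasDerivAt_one_sub_sq x))
  refine (h.congr_deriv ?_).congr_of_eventuallyEq (.of_forall fun y => ?_)
  · rcases le_or_gt 1 (x ^ 2) with hx | hx
    · have := squareBump_eq_zero hx
      rw [squareBump] at this
      simp [squareBumpDeriv₂, squareBump, this]
    · have : 1 - x ^ 2 ≠ 0 := by linarith
      simp [squareBumpDeriv₂, squareBump]
      field_simp
      ring
  · simp [squareBumpDeriv, squareBump]

theorem continuous_squareBumpDeriv : Continuous squareBumpDeriv :=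
  continuous_iff_continuousAt.2 fun x => (hasDerivAt_squareBumpDeriv x).continuousAt

theorem squareBumpDeriv_zero : squareBumpDeriv 0 = 0 := by simp [squareBumpDeriv]

theorem squareBumpDeriv_eq_zero_iff {x : ℝ} (hx : x ^ 2 < 1) : squareBumpDeriv x = 0 ↔ x = 0 := by
  have h₁ := (squareBump_pos hx).ne'
  have h₂ : 1 - x ^ 2 ≠ 0 := by linarith
  simp [squareBumpDeriv, h₁, h₂]

theorem squareBumpDeriv_nonneg_of_nonpos {x : ℝ} (hx : x ≤ 0) : 0 ≤ squareBumpDeriv x :=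
  mul_nonneg (by linarith) (mul_nonneg (by positivity) (expNegInvGlue.nonneg _))

theorem squareBumpDeriv_neg {x : ℝ} (h₀ : 0 < x) (h₁ : x < 1) : squareBumpDeriv x < 0 := by
  have hx : x ^ 2 < 1 := by nlinarith
  have := squareBump_pos hx
  have : 0 < (1 - x ^ 2)⁻¹ := inv_pos.2 (by linarith)
  exact mul_neg_of_neg_of_pos (by linarith) (by positivity)

theorem squareBumpDeriv₂_neg {x : ℝ} (hx : x ^ 4 < 1 / 3) : squareBumpDeriv₂ x < 0 := by
  have hx' : x ^ 2 < 1 := by nlinarith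
  have := squareBump_pos hx'
  have : 0 < (1 - x ^ 2)⁻¹ := inv_pos.2 (by linarith)
  exact mul_neg_of_neg_of_pos (by linarith) (by positivity)

theorem squareBumpDeriv₂_pos {x : ℝ} (hx : 1 / 3 < x ^ 4) (hx' : x ^ 2 < 1) :
    0 < squareBumpDeriv₂ x := by
  have := squareBump_pos hx'
  have : 0 < (1 - x ^ 2)⁻¹ := inv_pos.2 (by linarith)
  exact mul_pos (by linarith) (by positivity)

/-- The value of `squareBumpDeriv` at `1 / 2` is attained at exactly one further point, and the
second derivative is negative at the former and positive at the latter. -/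
theorem exists_squareBumpDeriv_eq_iff :
    ∃ b : ℝ, 1 / 2 < b ∧ b < 1 ∧ squareBumpDeriv₂ (1 / 2) < 0 ∧ 0 < squareBumpDeriv₂ b ∧
      ∀ x, squareBumpDeriv x = squareBumpDeriv (1 / 2) ↔ x = 1 / 2 ∨ x = b := by
  obtain ⟨m, hm₀, hm⟩ : ∃ m : ℝ, 0 < m ∧ m ^ 4 = 1 / 3 :=
    ⟨(1 / 3 : ℝ) ^ ((4 : ℕ) : ℝ)⁻¹, by positivity,
      Real.rpow_inv_natCast_pow (by norm_num) (by norm_num)⟩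
  have hm₁ : m < 1 := lt_of_pow_lt_pow_left₀ 4 zero_le_one (by rw [hm]; norm_num)
  have hm₂ : 1 / 2 < m := lt_of_pow_lt_pow_left₀ 4 hm₀.le (by rw [hm]; norm_num)
  have hanti : StrictAntiOn squareBumpDeriv (Set.Icc 0 m) := by
    refine strictAntiOn_of_deriv_neg (convex_Icc _ _) continuous_squareBumpDeriv.continuousOn ?_
    intro x hx
    rw [interior_Icc] at hx
    rw [(hasDerivAt_squareBumpDeriv x).deriv]
    exact squareBumpDeriv₂_neg (hm ▸ pow_lt_pow_left₀ hx.2 hx.1.le (by norm_num))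
  have hmono : StrictMonoOn squareBumpDeriv (Set.Icc m 1) := by
    refine strictMonoOn_of_deriv_pos (convex_Icc _ _) continuous_squareBumpDeriv.continuousOn ?_
    intro x hx
    rw [interior_Icc] at hx
    rw [(hasDerivAt_squareBumpDeriv x).deriv]
    exact squareBumpDeriv₂_pos (hm ▸ pow_lt_pow_left₀ hx.1 hm₀.le (by norm_num))
      (by nlinarith [hx.1, hx.2])
  have hneg : squareBumpDeriv (1 / 2) < 0 := squareBumpDeriv_neg (by norm_num) (by norm_num)
  have hlt : squareBumpDeriv m < squareBumpDeriv (1 / 2) :=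
    hanti ⟨by norm_num, hm₂.le⟩ ⟨hm₀.le, le_rfl⟩ hm₂
  obtain ⟨b, ⟨hmb, hb₁⟩, hb⟩ := intermediate_value_Ioo hm₁.le
    continuous_squareBumpDeriv.continuousOn
    (show squareBumpDeriv (1 / 2) ∈ Set.Ioo (squareBumpDeriv m) (squareBumpDeriv 1) from
      ⟨hlt, by rwa [squareBumpDeriv_eq_zero (x := 1) (by norm_num)]⟩)
  refine ⟨b, hm₂.trans hmb, hb₁, squareBumpDeriv₂_neg (by norm_num),
    squareBumpDeriv₂_pos (hm ▸ pow_lt_pow_left₀ hmb hm₀.le (by norm_num)) (by nlinarith),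
    fun x => ⟨fun hx => ?_, ?_⟩⟩
  · rcases le_or_gt x 0 with h₀ | h₀
    · linarith [squareBumpDeriv_nonneg_of_nonpos h₀]
    rcases le_or_gt 1 x with h₁ | h₁
    · linarith [squareBumpDeriv_eq_zero (x := x) (by nlinarith)]
    rcases le_total x m with h | h
    · exact .inl (hanti.injOn ⟨h₀.le, h⟩ ⟨by norm_num, hm₂.le⟩ hx)
    · exact .inr (hmono.injOn ⟨h, h₁.le⟩ ⟨hmb.le, hb₁.le⟩ (hx.trans hb.symm))
  · rintro (rfl | rfl)
    exacts [rfl, hb]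

/-- A suitable multiple of the bump added to a linear function of slope `A ≠ 0` has exactly two
critical points, a non-degenerate maximum and a non-degenerate minimum. -/
theorem exists_mul_squareBumpDeriv_eq_iff {A : ℝ} (hA : A ≠ 0) :
    ∃ C a b : ℝ, 0 < C ∧ a ≠ b ∧ a ^ 2 < 1 ∧ b ^ 2 < 1 ∧
      squareBumpDeriv₂ a < 0 ∧ 0 < squareBumpDeriv₂ b ∧
      ∀ x, A + C * squareBumpDeriv x = 0 ↔ x = a ∨ x = b := by
  obtain ⟨b, hb, hb₁, h₁, h₂, h⟩ := exists_squareBumpDeriv_eq_iff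
  have hneg : squareBumpDeriv (1 / 2) < 0 := squareBumpDeriv_neg (by norm_num) (by norm_num)
  rcases hA.lt_or_gt with hA | hA
  · refine ⟨A / squareBumpDeriv (1 / 2), -(1 / 2), -b, div_pos_of_neg_of_neg hA hneg,
      by intro hab; linarith, by norm_num, by nlinarith, ?_, ?_, fun x => ?_⟩
    · simpa [squareBumpDeriv₂, squareBump, Even.neg_pow (show Even 4 by decide)] using h₁
    · simpa [squareBumpDeriv₂, squareBump, Even.neg_pow (show Even 4 by decide)] using h₂
    · have hodd : squareBumpDeriv (-x) = -squareBumpDeriv x := by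
        simp [squareBumpDeriv, squareBump]
      rw [← neg_eq_iff_eq_neg, ← neg_eq_iff_eq_neg, ← h (-x), hodd]
      rw [show A + A / squareBumpDeriv (1 / 2) * squareBumpDeriv x =
          A / squareBumpDeriv (1 / 2) * (squareBumpDeriv (1 / 2) + squareBumpDeriv x) by
        have := hneg.ne; field_simp, mul_eq_zero, or_iff_right (div_ne_zero hA.ne hneg.ne)]
      constructor <;> intro <;> linarith
  · refine ⟨-A / squareBumpDeriv (1 / 2), 1 / 2, b, div_pos_of_neg_of_neg (by linarith) hneg,
      hb.ne, by norm_num, by nlinarith, h₁, h₂, fun x => ?_⟩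
    rw [← h x]
    rw [show A + -A / squareBumpDeriv (1 / 2) * squareBumpDeriv x =
        A / squareBumpDeriv (1 / 2) * (squareBumpDeriv (1 / 2) - squareBumpDeriv x) by
      have := hneg.ne; field_simp; ring, mul_eq_zero, or_iff_right (div_ne_zero hA.ne' hneg.ne)]
    constructor <;> intro <;> linarith

theorem hasFDerivAt_mul_fst_snd {g h g' h' : ℝ → ℝ} (hg : ∀ x, HasDerivAt g (g' x) x)
    (hh : ∀ x, HasDerivAt h (h' x) x) (p : ℝ × ℝ) :
    HasFDerivAt (fun q : ℝ × ℝ => g q.1 * h q.2)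
      ((g' p.1 * h p.2) • ContinuousLinearMap.fst ℝ ℝ ℝ +
        (g p.1 * h' p.2) • ContinuousLinearMap.snd ℝ ℝ ℝ) p := by
  have h₁ := (hg p.1).comp_hasFDerivAt p (hasFDerivAt_fst (𝕜 := ℝ) (p := p))
  have h₂ := (hh p.2).comp_hasFDerivAt p (hasFDerivAt_snd (𝕜 := ℝ) (p := p))
  refine (h₁.mul h₂).congr_fderiv ?_
  ext <;> simp [mul_comm]

theorem fderiv_linear_add_mul {u u' : ℝ → ℝ} (hu : ∀ x, HasDerivAt u (u' x) x) (A B C : ℝ) (p v : ℝ × ℝ) :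
    fderiv ℝ (fun q : ℝ × ℝ => A * q.1 + B + C * (u q.1 * u q.2)) p v =
      A * v.1 + C * v.1 * (u' p.1 * u p.2) + C * v.2 * (u p.1 * u' p.2) := by
  have h := (((hasFDerivAt_fst (𝕜 := ℝ) (p := p)).const_mul A).add_const B).add
    ((hasFDerivAt_mul_fst_snd hu hu p).const_mul C)
  erw [h.fderiv]
  simp
  ring

theorem hessianForm_linear_add_mul {u u' u'' : ℝ → ℝ} (hu : ∀ x, HasDerivAt u (u' x) x)
    (hu' : ∀ x, HasDerivAt u' (u'' x) x) (A B C : ℝ) (p v w : ℝ × ℝ) :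
    hessianForm (fun q : ℝ × ℝ => A * q.1 + B + C * (u q.1 * u q.2)) p v w =
      C * (u'' p.1 * u p.2 * v.1 * w.1 + u' p.1 * u' p.2 * (v.1 * w.2 + v.2 * w.1) +
        u p.1 * u'' p.2 * v.2 * w.2) := by
  simp only [hessianForm, fderiv_linear_add_mul hu]
  have h := (((hasFDerivAt_mul_fst_snd hu' hu p).const_mul (C * v.1)).const_add (A * v.1)).add
    ((hasFDerivAt_mul_fst_snd hu hu' p).const_mul (C * v.2))
  erw [h.fderiv]
  simp
  ring

theorem mem_openSquare_iff {p : ℝ × ℝ} : p ∈ openSquare ↔ p.1 ^ 2 < 1 ∧ p.2 ^ 2 < 1 := by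
  simp [openSquare, sq_lt_one_iff_abs_lt_one, abs_lt]

/-- For all reals `A ≠ 0` and `B` there is a smooth function `f̃ : ℝ² → ℝ` agreeing with
`(x, y) ↦ A·x + B` outside the open square `(−1,1)²`, whose set of critical points consists of
exactly two points `p₁ ≠ p₂` inside the square, where `p₁` is a non-degenerate local maximum
(negative definite Hessian) and `p₂` is a non-degenerate saddle (Hessian with negative
determinant). -/
theorem exists_smooth_perturbation_max_saddle (A B : ℝ) (hA : A ≠ 0) :
    ∃ ftilde : ℝ × ℝ → ℝ, ContDiff ℝ (⊤ : ℕ∞) ftilde ∧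
      (∀ p : ℝ × ℝ, p ∉ openSquare → ftilde p = A * p.1 + B) ∧
      ∃ p₁ p₂ : ℝ × ℝ, p₁ ≠ p₂ ∧ p₁ ∈ openSquare ∧ p₂ ∈ openSquare ∧
        {p : ℝ × ℝ | fderiv ℝ ftilde p = 0} = {p₁, p₂} ∧
        (∀ v : ℝ × ℝ, v ≠ 0 → hessianForm ftilde p₁ v v < 0) ∧
        hessianForm ftilde p₂ (1, 0) (1, 0) * hessianForm ftilde p₂ (0, 1) (0, 1)
          - (hessianForm ftilde p₂ (1, 0) (0, 1)) ^ 2 < 0 := by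
  obtain ⟨K, a, b, hK, hab, ha, hb, ha₂, hb₂, h⟩ := exists_mul_squareBumpDeriv_eq_iff hA
  have h0 : 0 < squareBump 0 := squareBump_pos (by norm_num)
  have h0₂ : squareBumpDeriv₂ 0 < 0 := squareBumpDeriv₂_neg (by norm_num)
  have hua := squareBump_pos ha
  have hub := squareBump_pos hb
  obtain ⟨C, hC, rfl⟩ : ∃ C : ℝ, 0 < C ∧ K = C * squareBump 0 :=
    ⟨K / squareBump 0, by positivity, by field_simp⟩
  have hess := hessianForm_linear_add_mul hasDerivAt_squareBump hasDerivAt_squareBumpDeriv A B C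
  refine ⟨fun q => A * q.1 + B + C * (squareBump q.1 * squareBump q.2), ?_, fun p hp => ?_,
    (a, 0), (b, 0), by simpa using hab, mem_openSquare_iff.2 ⟨ha, by norm_num⟩,
    mem_openSquare_iff.2 ⟨hb, by norm_num⟩, ?_, fun v hv => ?_, ?_⟩
  · have h₁ := contDiff_squareBump.comp (contDiff_fst (E := ℝ) (F := ℝ))
    have h₂ := contDiff_squareBump.comp (contDiff_snd (E := ℝ) (F := ℝ))
    exact ((contDiff_const.mul contDiff_fst).add contDiff_const).add
      (contDiff_const.mul (h₁.mul h₂))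
  · rw [mem_openSquare_iff, not_and_or, not_lt, not_lt] at hp
    rcases hp with hp | hp <;> simp [squareBump_eq_zero hp]
  · ext ⟨x, y⟩
    have hcrit := fderiv_linear_add_mul hasDerivAt_squareBump A B C (x, y)
    simp only [Set.mem_ofPred_eq, Set.mem_insert_iff, Set.mem_singleton_iff, Prod.mk.injEq,
      ← or_and_right, ← h x]
    constructor
    · intro hxy
      simp only [hxy, zero_apply] at hcrit
      have hx := hcrit (1, 0)
      have hy := hcrit (0, 1)
      simp only [mul_one, mul_zero, zero_mul, add_zero, zero_add] at hx hy
      have hx₁ : x ^ 2 < 1 := by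
        by_contra! hc
        simp [squareBumpDeriv_eq_zero hc, hA.symm] at hx
      have hy₁ : y ^ 2 < 1 := by
        by_contra! hc
        simp [squareBump_eq_zero hc, hA.symm] at hx
      have hy₀ : y = 0 := by
        simpa [hC.ne, hC.ne', (squareBump_pos hx₁).ne', squareBumpDeriv_eq_zero_iff hy₁]
          using hy
      subst hy₀
      exact ⟨by linarith, rfl⟩
    · rintro ⟨hx, rfl⟩
      refine ContinuousLinearMap.ext fun v => ?_
      rw [hcrit, squareBumpDeriv_zero, zero_apply]
      linear_combination v.1 * hx
  · rw [hess]
    simp only [squareBumpDeriv_zero]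
    have e₁ : squareBumpDeriv₂ a * squareBump 0 < 0 := mul_neg_of_neg_of_pos ha₂ h0
    have e₂ : squareBump a * squareBumpDeriv₂ 0 < 0 := mul_neg_of_pos_of_neg hua h0₂
    refine mul_neg_of_pos_of_neg hC ?_
    have hv' : v.1 ≠ 0 ∨ v.2 ≠ 0 := by
      by_contra! hc
      exact hv (Prod.ext hc.1 hc.2)
    rcases hv' with hv' | hv'
    · nlinarith [mul_neg_of_neg_of_pos e₁ (sq_pos_of_ne_zero hv'),
        mul_nonpos_of_nonpos_of_nonneg e₂.le (sq_nonneg v.2)]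
    · nlinarith [mul_neg_of_neg_of_pos e₂ (sq_pos_of_ne_zero hv'),
        mul_nonpos_of_nonpos_of_nonneg e₁.le (sq_nonneg v.1)]
  · simp only [hess, squareBumpDeriv_zero]
    have e₁ : 0 < C * (squareBumpDeriv₂ b * squareBump 0) := by positivity
    have e₂ : C * (squareBump b * squareBumpDeriv₂ 0) < 0 :=
      mul_neg_of_pos_of_neg hC (mul_neg_of_pos_of_neg hub h0₂)
    nlinarith [mul_neg_of_pos_of_neg e₁ e₂]
end

section
/- Let Ω₂ = {(x,y) ∈ ℝ² : −x² < y < x² and 0 < x < 1}. Then Ω₂ satisfies the segment property at the origin: taking the vector v = (1/4, 0) and the neighbourhood U equal to the open ball of radius 1/4 centred at the origin, one has z + t·v ∈ Ω₂ for every z ∈ closure(Ω₂) ∩ U and every t ∈ (0,1). -/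
/-- The cusp domain `Ω₂ = {(x,y) : −x² < y < x², 0 < x < 1} ⊂ ℝ²`. -/
def Omega2 : Set (ℝ × ℝ) :=
  {p : ℝ × ℝ | -p.1 ^ 2 < p.2 ∧ p.2 < p.1 ^ 2 ∧ 0 < p.1 ∧ p.1 < 1}

/-- Points of `closure Ω₂` satisfy the non-strict inequalities `−x² ≤ y ≤ x²` and `0 ≤ x`. -/
theorem closure_Omega2_subset :
    closure Omega2 ⊆ {p : ℝ × ℝ | -p.1 ^ 2 ≤ p.2 ∧ p.2 ≤ p.1 ^ 2 ∧ 0 ≤ p.1} := by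
  refine closure_minimal (fun p hp => ⟨hp.1.le, hp.2.1.le, hp.2.2.1.le⟩) ?_
  simp only [Set.ofPred_and]
  refine .inter ?_ (.inter ?_ ?_) <;> exact isClosed_le (by fun_prop) (by fun_prop)

/-- `Ω₂` satisfies the segment property at the origin, with the vector `v = (1/4, 0)` and
the neighbourhood equal to the open Euclidean ball of radius `1/4` centred at the origin:
for every `z` in `closure Ω₂` with `z.1² + z.2² < (1/4)²` and every `t ∈ (0,1)`,
the point `z + t • v` lies in `Ω₂`. -/
theorem Omega2_segment_property :
    ∀ z ∈ closure Omega2, z.1 ^ 2 + z.2 ^ 2 < (1 / 4 : ℝ) ^ 2 →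
      ∀ t : ℝ, 0 < t → t < 1 → z + t • ((1 / 4 : ℝ), (0 : ℝ)) ∈ Omega2 := by
  rintro ⟨x, y⟩ hz hball t ht0 ht1
  obtain ⟨hlow, hup, hx⟩ := closure_Omega2_subset hz
  simp only at hlow hup hx hball
  have hsq : x ^ 2 < (x + t * (1 / 4)) ^ 2 := by gcongr; linarith
  have hx4 : x < 1 / 4 := by nlinarith [sq_nonneg y]
  simp only [Omega2, Set.mem_ofPred_eq, Prod.smul_mk, Prod.mk_add_mk, smul_eq_mul, mul_zero,
    add_zero]
  refine ⟨?_, ?_, ?_, ?_⟩ <;> linarith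
end

section
/- Let E be a finite-dimensional real inner product space and let Φ : E → E satisfy Φ(0) = 0 and be differentiable at 0 with derivative equal to the identity map. Let (xₙ) and (yₙ) be sequences of nonzero vectors of E converging to 0 such that the angle between xₙ and yₙ converges to some θ ∈ [0,π]. Then Φ(xₙ) and Φ(yₙ) are nonzero for all sufficiently large n, and the angle between Φ(xₙ) and Φ(yₙ)) converges to θ. -/
open Filter Topology

open Asymptotics InnerProductGeometry

/-- Asymptotically equivalent families of nonzero vectors make an angle tending to `0`. -/
lemma Asymptotics.IsEquivalent.tendsto_angle_zero {α E : Type*} [NormedAddCommGroup E]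
    [InnerProductSpace ℝ E] {l : Filter α} {z x : α → E} (h : z ~[l] x)
    (hx : ∀ᶠ a in l, x a ≠ 0) : Tendsto (fun a => angle (z a) (x a)) l (𝓝 0) := by
  have hratio : Tendsto (fun a => ‖z a - x a‖ / ‖x a‖) l (𝓝 0) :=
    h.isLittleO.norm_norm.tendsto_div_nhds_zero
  have hinner : Tendsto (fun a => inner ℝ (z a) (x a) / ‖x a‖ ^ 2) l (𝓝 1) := by
    rw [tendsto_iff_norm_sub_tendsto_zero]
    refine squeeze_zero' (.of_forall fun _ => norm_nonneg _) ?_ hratio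
    filter_upwards [hx] with a ha
    have hpos : 0 < ‖x a‖ := norm_pos_iff.2 ha
    have heq : inner ℝ (z a) (x a) / ‖x a‖ ^ 2 - 1
        = inner ℝ (z a - x a) (x a) / ‖x a‖ ^ 2 := by
      rw [inner_sub_left, real_inner_self_eq_norm_sq]
      field_simp
    rw [heq, norm_div, norm_pow, norm_norm, div_le_div_iff₀ (by positivity) hpos]
    nlinarith [norm_inner_le_norm (𝕜 := ℝ) (z a - x a) (x a)]
  have hnorm : Tendsto (fun a => ‖z a‖ / ‖x a‖) l (𝓝 1) := by
    rw [tendsto_iff_norm_sub_tendsto_zero]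
    refine squeeze_zero' (.of_forall fun _ => norm_nonneg _) ?_ hratio
    filter_upwards [hx] with a ha
    have hpos : 0 < ‖x a‖ := norm_pos_iff.2 ha
    rw [div_sub_one hpos.ne', norm_div, norm_norm]
    gcongr
    exact abs_norm_sub_norm_le _ _
  have hcos := (Real.continuous_arccos.tendsto _).comp (hinner.div hnorm one_ne_zero)
  rw [div_one, Real.arccos_one] at hcos
  refine hcos.congr' ?_
  filter_upwards [hx] with a ha
  have hpos : 0 < ‖x a‖ := norm_pos_iff.2 ha
  simp only [Function.comp_apply, Pi.div_apply, angle]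
  congr 1
  field_simp

/-- The angle changes by at most the sum of the angles by which its two sides move. -/
lemma InnerProductGeometry.abs_angle_sub_angle_le {E : Type*} [NormedAddCommGroup E]
    [InnerProductSpace ℝ E] (u v x y : E) :
    |angle u v - angle x y| ≤ angle u x + angle v y := by
  rw [abs_sub_le_iff]
  constructor
  · linarith [angle_le_angle_add_angle u x v, angle_le_angle_add_angle x y v, angle_comm y v]
  · linarith [angle_le_angle_add_angle x u y, angle_le_angle_add_angle u v y, angle_comm x u]

/-- A map fixing `0` with derivative the identity there is asymptotic to the identity at `0`. -/
lemma HasFDerivAt.isEquivalent_id {E : Type*} [NormedAddCommGroup E] [NormedSpace ℝ E]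
    {Φ : E → E} (hΦ : HasFDerivAt Φ (ContinuousLinearMap.id ℝ E) 0) (hΦ0 : Φ 0 = 0) :
    Φ ~[𝓝 0] id := by
  simpa [hΦ0, IsEquivalent, Pi.sub_def] using! hΦ.isLittleO

/-- Let `E` be a finite-dimensional real inner product space and `Φ : E → E` with `Φ(0) = 0`,
differentiable at `0` with derivative the identity. If `(xₙ)` and `(yₙ)` are sequences of
nonzero vectors converging to `0` such that the angle between `xₙ` and `yₙ` converges to
`θ ∈ [0,π]`, then `Φ(xₙ)` and `Φ(yₙ)` are eventually nonzero and the angle between `Φ(xₙ)`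
and `Φ(yₙ)` converges to `θ`. -/
theorem angle_map_map_tendsto
    {E : Type*} [NormedAddCommGroup E] [InnerProductSpace ℝ E] [FiniteDimensional ℝ E]
    (Φ : E → E) (hΦ0 : Φ 0 = 0)
    (hΦ : HasFDerivAt Φ (ContinuousLinearMap.id ℝ E) 0)
    (x y : ℕ → E) (hx : ∀ n, x n ≠ 0) (hy : ∀ n, y n ≠ 0)
    (hx0 : Tendsto x atTop (nhds 0)) (hy0 : Tendsto y atTop (nhds 0))
    (θ : ℝ) (hθ : θ ∈ Set.Icc 0 Real.pi)
    (hangle : Tendsto (fun n => InnerProductGeometry.angle (x n) (y n)) atTop (nhds θ)) :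
    (∀ᶠ n in atTop, Φ (x n) ≠ 0 ∧ Φ (y n) ≠ 0) ∧
      Tendsto (fun n => InnerProductGeometry.angle (Φ (x n)) (Φ (y n))) atTop (nhds θ) := by
  have hxΦ : (Φ ∘ x) ~[atTop] x := (hΦ.isEquivalent_id hΦ0).comp_tendsto hx0
  have hyΦ : (Φ ∘ y) ~[atTop] y := (hΦ.isEquivalent_id hΦ0).comp_tendsto hy0
  constructor
  · filter_upwards [hxΦ.isBigO_symm.eq_zero_imp, hyΦ.isBigO_symm.eq_zero_imp] with n hxn hyn
    exact ⟨fun h => hx n (hxn h), fun h => hy n (hyn h)⟩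
  · have hsum := (hxΦ.tendsto_angle_zero (.of_forall hx)).add
      (hyΦ.tendsto_angle_zero (.of_forall hy))
    rw [add_zero] at hsum
    have hdiff : Tendsto
        (fun n => angle (Φ (x n)) (Φ (y n)) - angle (x n) (y n)) atTop (𝓝 0) :=
      squeeze_zero_norm (fun n => abs_angle_sub_angle_le _ _ _ _) hsum
    simpa using hdiff.add hangle
end
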